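/- Let x ∈ ℤ[ω], ω = e^{2πi/3}, and let a word w over D = {0, ±1, ±ω, ±ω²} be a concatenation w = u_1 u_2 ⋯ u_n of blocks u_ℓ from the set C = {0} ∪ {0d : d ∈ D, d ≠ 0} such that w, read as a digit string (most significant digit first), is a (β, D)-representation of x in base β = ω − 1. Let d_ℓ ∈ D be the last digit of the block u_ℓ. Then the number of optimal representations of x equals e A_{d_1} A_{d_2} ⋯ A_{d_n} eᵀ, where e = (1, 0, 0, 0, 0, 0, 0) ∈ ℤ^{1×7}. -/

import Mathlib

/-!
Splitting off the least significant digit gives a recursion for the number `N(x, k)` of normalized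
representations of `x` of weight `k`: `N(β y, k) = N(y, k)`, and, since the digits congruent to a
unit `μ` modulo `β` are `μ, μ ω, μ ω²`,
`N(β y + μ, k) = N(y, k - 1) + N(y - μ, k - 1) + N(y + μ ω², k - 1)`
(`numRep_beta_mul`, `numRep_add_unit`).

Let `x` be the value of a concatenation of blocks and `m` its number of nonzero digits. By induction
on the number of blocks, no representation of `x` has weight below `m`, and no representation of
`x - λ^j` has weight below `m - 1` (`WeightBound`). The row vector
`(N(x, m), N(x - λ^0, m - 1), …, N(x - λ^5, m - 1))` is `e` for the empty concatenation, and
appending a block with last digit `d` multiplies it by `A_d` from the right: expanding the seven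
counts for `β x` or `β² x + d` by the recursion, all terms below the weight bounds vanish and the
others are entries of the previous row (`CountRow.zero_block`, `CountRow.block`,
`row_mul_E0`, `row_mul_AmatE`). As the given word has weight `m`, the optimal representations of
`x` are exactly the normalized ones of weight `m`, and their number is the first entry of the row.
-/

open Matrix

noncomputable section

/-- The primitive cube root of unity `ω = exp(2πi/3)`. -/
def ω : ℂ := Complex.exp (2 * Real.pi * Complex.I / 3)

/-- The base `β = ω - 1`. -/
def eβ : ℂ := ω - 1

/-- The digit set `D = {0, ±1, ±ω, ±ω²}`. -/
def eD : Set ℂ := {0, 1, -1, ω, -ω, ω ^ 2, -ω ^ 2}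

/-- The ring of Eisenstein integers `ℤ[ω]`, as a subset of `ℂ`. -/
def EisZ : Set ℂ := {x | ∃ a b : ℤ, x = (a : ℂ) + (b : ℂ) * ω}

/-- Value of a digit string `d_{n-1} ⋯ d_0`, given as a list with the least
significant digit first: `eval [d_0, d_1, …, d_{n-1}] = Σ d_j β^j`. -/
def evalE (l : List ℂ) : ℂ :=
  l.foldr (fun d acc => d + eβ * acc) 0

/-- `l` (least significant digit first) is a `(β, D)`-representation of `x`. -/
def eIsRep (x : ℂ) (l : List ℂ) : Prop :=
  (∀ d ∈ l, d ∈ eD) ∧ evalE l = x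

/-- A representation is normalized if it is empty or its leading digit
(the last entry of the LSD-first list) is nonzero. -/
def eNormalized (l : List ℂ) : Prop := l.getLast? ≠ some 0

open scoped Classical in
/-- Number of nonzero digits (Hamming weight). -/
def eweight (l : List ℂ) : ℕ := (l.filter (fun d => d ≠ 0)).length

/-- A representation of `x` is optimal if it is normalized and its number of
nonzero digits is minimal among all representations of `x`. -/
def eOptimal (x : ℂ) (l : List ℂ) : Prop :=
  eIsRep x l ∧ eNormalized l ∧ ∀ l' : List ℂ, eIsRep x l' → eweight l ≤ eweight l'

/-- The number of optimal representations of `x`. -/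
def enumOpt (x : ℂ) : ℕ := Nat.card {l : List ℂ // eOptimal x l}

/-- The row vector `e = (1,0,0,0,0,0,0)`. -/
def e7 : Matrix (Fin 1) (Fin 7) ℤ := !![1,0,0,0,0,0,0]

/-- The permutation matrix `R` fixing coordinate 1 and cyclically permuting
coordinates 2,…,7. -/
def R7 : Matrix (Fin 7) (Fin 7) ℤ :=
  !![1,0,0,0,0,0,0;
     0,0,1,0,0,0,0;
     0,0,0,1,0,0,0;
     0,0,0,0,1,0,0;
     0,0,0,0,0,1,0;
     0,0,0,0,0,0,1;
     0,1,0,0,0,0,0]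

/-- The matrix `A_0`. -/
def E0 : Matrix (Fin 7) (Fin 7) ℤ :=
  !![1,0,0,0,0,0,0;
     0,0,0,0,0,0,0;
     0,0,0,0,0,0,0;
     0,0,0,0,0,0,0;
     0,0,0,0,0,0,0;
     0,0,0,0,0,0,0;
     0,0,0,0,0,0,0]

/-- The matrix `A_1`. -/
def E1 : Matrix (Fin 7) (Fin 7) ℤ :=
  !![1,1,0,0,0,0,0;
     0,0,0,0,0,0,0;
     0,0,0,0,0,0,0;
     0,0,0,0,0,0,0;
     1,0,0,1,0,0,0;
     2,0,0,1,1,1,0;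
     1,0,0,0,0,1,0]

/-- The matrix `A_{-1} = (Rᵀ)³ A_1 R³`. -/
def Em1 : Matrix (Fin 7) (Fin 7) ℤ := (R7ᵀ) ^ 3 * E1 * R7 ^ 3

open scoped Classical in
/-- The matrix `A_d` associated with a digit `d ∈ D`, where
`A_{λ^k} = (Rᵀ)^k A_1 R^k` for `λ = -ω²`. -/
def AmatE (d : ℂ) : Matrix (Fin 7) (Fin 7) ℤ :=
  if d = 0 then E0
  else if d = 1 then E1
  else if d = -ω ^ 2 then (R7ᵀ) ^ 1 * E1 * R7 ^ 1
  else if d = ω then (R7ᵀ) ^ 2 * E1 * R7 ^ 2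
  else if d = -1 then (R7ᵀ) ^ 3 * E1 * R7 ^ 3
  else if d = ω ^ 2 then (R7ᵀ) ^ 4 * E1 * R7 ^ 4
  else (R7ᵀ) ^ 5 * E1 * R7 ^ 5

/-! ### Arithmetic in the Eisenstein integers -/

lemma omega_sq : ω ^ 2 = -1 - ω := by
  have h3 : ω ^ 3 = 1 := by
    rw [ω, ← Complex.exp_nat_mul, ← Complex.exp_two_pi_mul_I]
    congr 1
    push_cast
    ring
  have h1 : ω ≠ 1 := by
    rw [ω, Ne, Complex.exp_eq_one_iff]
    rintro ⟨n, hn⟩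
    have hpi : (2 * Real.pi * Complex.I : ℂ) ≠ 0 := Complex.two_pi_I_ne_zero
    have h : ((3 * n : ℤ) : ℂ) = ((1 : ℤ) : ℂ) := by
      apply mul_right_cancel₀ hpi
      push_cast
      linear_combination (-3) * hn
    have h' := Int.cast_injective h
    omega
  apply mul_left_cancel₀ (sub_ne_zero.2 h1)
  linear_combination h3

/-- `1` and `ω` are linearly independent over `ℤ`: a relation `a + b ω = 0` forces
`a² - a b + b² = 0`, the norm of `a + b ω`. -/
lemma coords_zero {a b : ℤ} (h : (a : ℂ) + b * ω = 0) : a = 0 ∧ b = 0 := by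
  have hn : ((a ^ 2 - a * b + b ^ 2 : ℤ) : ℂ) = 0 := by
    push_cast
    linear_combination ((a : ℂ) - b - b * ω) * h + (b : ℂ) ^ 2 * omega_sq
  have hn' : a ^ 2 - a * b + b ^ 2 = 0 := by exact_mod_cast hn
  constructor
  · have : a ^ 2 ≤ 0 := by nlinarith [sq_nonneg (a - 2 * b)]
    nlinarith [pow_eq_zero_iff (two_ne_zero) |>.1 (le_antisymm this (sq_nonneg a))]
  · have : b ^ 2 ≤ 0 := by nlinarith [sq_nonneg (2 * a - b)]
    nlinarith [pow_eq_zero_iff (two_ne_zero) |>.1 (le_antisymm this (sq_nonneg b))]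

lemma beta_ne_zero : eβ ≠ 0 := by
  intro h
  have := @coords_zero (-1) 1 (by push_cast; rw [eβ] at h; linear_combination h)
  omega

lemma EisZ_zero : (0 : ℂ) ∈ EisZ := ⟨0, 0, by simp⟩

lemma EisZ_add {x y : ℂ} (hx : x ∈ EisZ) (hy : y ∈ EisZ) : x + y ∈ EisZ := by
  obtain ⟨a, b, rfl⟩ := hx
  obtain ⟨c, d, rfl⟩ := hy
  exact ⟨a + c, b + d, by push_cast; ring⟩

lemma EisZ_neg {x : ℂ} (hx : x ∈ EisZ) : -x ∈ EisZ := by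
  obtain ⟨a, b, rfl⟩ := hx
  exact ⟨-a, -b, by push_cast; ring⟩

lemma EisZ_sub {x y : ℂ} (hx : x ∈ EisZ) (hy : y ∈ EisZ) : x - y ∈ EisZ := by
  rw [sub_eq_add_neg]
  exact EisZ_add hx (EisZ_neg hy)

lemma EisZ_mul {x y : ℂ} (hx : x ∈ EisZ) (hy : y ∈ EisZ) : x * y ∈ EisZ := by
  obtain ⟨a, b, rfl⟩ := hx
  obtain ⟨c, d, rfl⟩ := hy
  exact ⟨a * c - b * d, a * d + b * c - b * d, by
    push_cast
    linear_combination (b * d : ℂ) * omega_sq⟩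

lemma EisZ_omega : ω ∈ EisZ := ⟨0, 1, by simp⟩

lemma EisZ_beta : eβ ∈ EisZ := ⟨-1, 1, by rw [eβ]; push_cast; ring⟩

/-- The nonzero digits, i.e. the six units of `ℤ[ω]`. -/
def IsDigitUnit (u : ℂ) : Prop := u ∈ eD ∧ u ≠ 0

/-- The primitive sixth root of unity `λ = -ω²`, written as `1 + ω`. -/
def lam : ℂ := 1 + ω

lemma lam_pow_two : lam ^ 2 = ω := by
  rw [lam]
  linear_combination omega_sq

lemma lam_pow_three : lam ^ 3 = -1 := by
  rw [pow_succ, lam_pow_two, lam]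
  linear_combination omega_sq

lemma lam_pow_four : lam ^ 4 = ω ^ 2 := by
  rw [← lam_pow_two]
  ring

lemma lam_pow_five : lam ^ 5 = -ω := by
  rw [← lam_pow_two]
  linear_combination lam ^ 2 * lam_pow_three

lemma lam_pow_six : lam ^ 6 = 1 := by
  linear_combination (lam ^ 3 - 1) * lam_pow_three

lemma lam_pow_mod (j : ℕ) : lam ^ (j % 6) = lam ^ j := by
  conv_rhs => rw [← Nat.div_add_mod j 6, pow_add, pow_mul, lam_pow_six, one_pow, one_mul]

lemma lam_ne_zero : lam ≠ 0 := by
  intro h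
  have := lam_pow_six
  simp [h] at this

lemma lam_pow_mem (j : ℕ) : lam ^ j ∈ eD := by
  rw [← lam_pow_mod]
  have : j % 6 < 6 := Nat.mod_lt _ (by norm_num)
  have h1 : 1 + ω = -ω ^ 2 := by linear_combination omega_sq
  interval_cases j % 6
  · simp [eD]
  · simp [eD, lam, h1]
  · simp [eD, lam_pow_two]
  · simp [eD, lam_pow_three]
  · simp [eD, lam_pow_four]
  · simp [eD, lam_pow_five]

lemma isDigitUnit_lam_pow (j : ℕ) : IsDigitUnit (lam ^ j) :=
  ⟨lam_pow_mem j, pow_ne_zero _ lam_ne_zero⟩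

lemma isDigitUnit_iff {u : ℂ} : IsDigitUnit u ↔ ∃ j < 6, u = lam ^ j := by
  constructor
  · rintro ⟨h, h0⟩
    simp only [eD, Set.mem_insert_iff, Set.mem_singleton_iff] at h
    rcases h with h | h | h | h | h | h | h
    · exact absurd h h0
    · exact ⟨0, by norm_num, by simp [h]⟩
    · exact ⟨3, by norm_num, by rw [h, lam_pow_three]⟩
    · exact ⟨2, by norm_num, by rw [h, lam_pow_two]⟩
    · exact ⟨5, by norm_num, by rw [h, lam_pow_five]⟩
    · exact ⟨4, by norm_num, by rw [h, lam_pow_four]⟩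
    · exact ⟨1, by norm_num, by rw [h, lam, pow_one]; linear_combination -omega_sq⟩
  · rintro ⟨j, -, rfl⟩
    exact isDigitUnit_lam_pow j

lemma IsDigitUnit.mul {u v : ℂ} (hu : IsDigitUnit u) (hv : IsDigitUnit v) :
    IsDigitUnit (u * v) := by
  obtain ⟨i, -, rfl⟩ := isDigitUnit_iff.1 hu
  obtain ⟨j, -, rfl⟩ := isDigitUnit_iff.1 hv
  rw [← pow_add]
  exact isDigitUnit_lam_pow _

lemma isDigitUnit_omega : IsDigitUnit ω := by
  rw [← lam_pow_two]
  exact isDigitUnit_lam_pow 2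

lemma isDigitUnit_neg_one : IsDigitUnit (-1) := by
  rw [← lam_pow_three]
  exact isDigitUnit_lam_pow 3

lemma IsDigitUnit.neg {u : ℂ} (hu : IsDigitUnit u) : IsDigitUnit (-u) := by
  simpa using hu.mul isDigitUnit_neg_one

lemma mem_EisZ_of_mem_eD {d : ℂ} (hd : d ∈ eD) : d ∈ EisZ := by
  simp only [eD, Set.mem_insert_iff, Set.mem_singleton_iff] at hd
  rcases hd with h | h | h | h | h | h | h <;> rw [h]
  · exact EisZ_zero
  · exact ⟨1, 0, by simp⟩
  · exact ⟨-1, 0, by simp⟩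
  · exact EisZ_omega
  · exact EisZ_neg EisZ_omega
  · exact ⟨-1, -1, by rw [omega_sq]; push_cast; ring⟩
  · exact ⟨1, 1, by rw [omega_sq]; push_cast; ring⟩

/-- The residue class of `1` modulo `β` meets the digit set in `{1, ω, ω²}`: the coordinates
`a, b` of a multiple `a + b ω` of `β` satisfy `3 ∣ a + b`. -/
lemma digit_congr_one {d z : ℂ} (hd : d ∈ eD) (hz : z ∈ EisZ) (h : d - 1 = eβ * z) :
    d = 1 ∨ d = ω ∨ d = ω ^ 2 := by
  obtain ⟨a, b, rfl⟩ := hz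
  have key : d - 1 = (-a - b : ℂ) + (a - 2 * b) * ω := by
    rw [h, eβ]
    linear_combination (b : ℂ) * omega_sq
  simp only [eD, Set.mem_insert_iff, Set.mem_singleton_iff] at hd
  rcases hd with h | h | h | h | h | h | h
  · exfalso
    have := @coords_zero (-a - b + 1) (a - 2 * b) (by
      push_cast
      linear_combination h - key)
    omega
  · exact Or.inl h
  · exfalso
    have := @coords_zero (-a - b + 2) (a - 2 * b) (by
      push_cast
      linear_combination h - key)
    omega
  · exact Or.inr (Or.inl h)
  · exfalso
    have := @coords_zero (-a - b + 1) (a - 2 * b + 1) (by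
      push_cast
      linear_combination h - key)
    omega
  · exact Or.inr (Or.inr h)
  · exfalso
    have := @coords_zero (-a - b) (a - 2 * b - 1) (by
      push_cast
      linear_combination h - key - omega_sq)
    omega

lemma digit_congr {d μ z : ℂ} (hd : d ∈ eD) (hμ : IsDigitUnit μ) (hz : z ∈ EisZ)
    (h : d - μ = eβ * z) : d = μ ∨ d = μ * ω ∨ d = μ * ω ^ 2 := by
  obtain ⟨i, hi, rfl⟩ := isDigitUnit_iff.1 hμ
  -- Multiplication by the inverse unit reduces to the residue class of `1`.
  have hinv : lam ^ (6 - i) * lam ^ i = 1 := by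
    rw [← pow_add, Nat.sub_add_cancel hi.le, lam_pow_six]
  have hdu : lam ^ (6 - i) * d ∈ eD := by
    by_cases h0 : d = 0
    · simp [h0, eD]
    · exact ((isDigitUnit_lam_pow _).mul ⟨hd, h0⟩).1
  have hzu : lam ^ (6 - i) * z ∈ EisZ := EisZ_mul (mem_EisZ_of_mem_eD (lam_pow_mem _)) hz
  rcases digit_congr_one hdu hzu (by linear_combination lam ^ (6 - i) * h + hinv) with h | h | h
  · exact Or.inl (by linear_combination lam ^ i * h - d * hinv)
  · exact Or.inr (Or.inl (by linear_combination lam ^ i * h - d * hinv))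
  · exact Or.inr (Or.inr (by linear_combination lam ^ i * h - d * hinv))

lemma digit_congr_zero {d z : ℂ} (hd : d ∈ eD) (hz : z ∈ EisZ) (h : d = eβ * z) : d = 0 := by
  by_contra h0
  obtain ⟨a, b, rfl⟩ := hz
  have key : d = (-a - b : ℂ) + (a - 2 * b) * ω := by
    rw [h, eβ]
    linear_combination (b : ℂ) * omega_sq
  simp only [eD, Set.mem_insert_iff, Set.mem_singleton_iff] at hd
  rcases hd with h | h | h | h | h | h | h
  · exact h0 h
  · have := @coords_zero (-a - b - 1) (a - 2 * b) (by push_cast; linear_combination h - key)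
    omega
  · have := @coords_zero (-a - b + 1) (a - 2 * b) (by push_cast; linear_combination h - key)
    omega
  · have := @coords_zero (-a - b) (a - 2 * b - 1) (by push_cast; linear_combination h - key)
    omega
  · have := @coords_zero (-a - b) (a - 2 * b + 1) (by push_cast; linear_combination h - key)
    omega
  · have := @coords_zero (-a - b + 1) (a - 2 * b + 1) (by
      push_cast
      linear_combination h - key + omega_sq)
    omega
  · have := @coords_zero (-a - b - 1) (a - 2 * b - 1) (by
      push_cast
      linear_combination h - key - omega_sq)
    omega

/-! ### Counting normalized representations of a given weight -/

/-- The normalized representations of `x` of weight `k`. The weight is an integer, so that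
`k - 1` is meaningful for all `k`; the set is empty for `k < 0`. -/
def repSet (x : ℂ) (k : ℤ) : Set (List ℂ) :=
  {l | eIsRep x l ∧ eNormalized l ∧ (eweight l : ℤ) = k}

/-- The number, possibly infinite, of normalized representations of `x` of weight `k`. -/
def numRep (x : ℂ) (k : ℤ) : ℕ∞ := (repSet x k).encard

lemma evalE_cons (d : ℂ) (l : List ℂ) : evalE (d :: l) = d + eβ * evalE l := rfl

lemma evalE_mem {l : List ℂ} (h : ∀ d ∈ l, d ∈ eD) : evalE l ∈ EisZ := by
  induction l with
  | nil => exact EisZ_zero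
  | cons d l ih =>
    rw [evalE_cons]
    exact EisZ_add (mem_EisZ_of_mem_eD (h d (by simp)))
      (EisZ_mul EisZ_beta (ih fun e he => h e (by simp [he])))

lemma eweight_cons_zero (l : List ℂ) : eweight (0 :: l) = eweight l := by
  simp [eweight]

lemma eweight_cons {d : ℂ} (hd : d ≠ 0) (l : List ℂ) : eweight (d :: l) = eweight l + 1 := by
  simp [eweight, hd]

lemma eNormalized_cons (d : ℂ) (l : List ℂ) :
    eNormalized (d :: l) ↔ eNormalized l ∧ (l = [] → d ≠ 0) := by
  cases l with
  | nil => simp [eNormalized]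
  | cons a l => simp [eNormalized]

lemma cons_unit_mem_repSet {d x y : ℂ} {k : ℤ} (hd : IsDigitUnit d) (hx : x = d + eβ * y)
    (l : List ℂ) : d :: l ∈ repSet x k ↔ l ∈ repSet y (k - 1) := by
  have h1 : d + eβ * evalE l = d + eβ * y ↔ evalE l = y := by
    rw [add_right_inj, mul_right_inj' beta_ne_zero]
  subst hx
  simp only [repSet, Set.mem_ofPred_eq, eIsRep, evalE_cons, eNormalized_cons,
    eweight_cons hd.2, List.forall_mem_cons, hd.1, h1, true_and]
  constructor
  · rintro ⟨⟨h, h'⟩, ⟨h2, -⟩, h3⟩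
    exact ⟨⟨h, h'⟩, h2, by push_cast at h3; omega⟩
  · rintro ⟨⟨h, h'⟩, h2, h3⟩
    exact ⟨⟨h, h'⟩, ⟨h2, fun _ => hd.2⟩, by push_cast; omega⟩

lemma numRep_beta_mul {y : ℂ} (hy : y ∈ EisZ) (k : ℤ) : numRep (eβ * y) k = numRep y k := by
  by_cases h0 : y = 0
  · simp [h0]
  have : repSet (eβ * y) k = (List.cons 0) '' repSet y k := by
    ext l
    constructor
    · rintro ⟨⟨h1, h2⟩, h3, h4⟩
      cases l with
      | nil =>
        exact absurd h2.symm (mul_ne_zero beta_ne_zero h0)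
      | cons d l =>
        rw [List.forall_mem_cons] at h1
        rw [evalE_cons] at h2
        have hd : d = 0 := digit_congr_zero h1.1 (EisZ_sub hy (evalE_mem h1.2))
          (by linear_combination h2)
        subst hd
        rw [eweight_cons_zero] at h4
        rw [zero_add, mul_right_inj' beta_ne_zero] at h2
        exact ⟨l, ⟨⟨h1.2, h2⟩, ((eNormalized_cons _ _).1 h3).1, h4⟩, rfl⟩
    · rintro ⟨l, ⟨⟨h1, h2⟩, h3, h4⟩, rfl⟩
      refine ⟨⟨?_, ?_⟩, (eNormalized_cons _ _).2 ⟨h3, ?_⟩, ?_⟩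
      · rw [List.forall_mem_cons]
        exact ⟨by simp [eD], h1⟩
      · rw [evalE_cons, h2, zero_add]
      · rintro rfl
        exact absurd h2.symm h0
      · rw [eweight_cons_zero, h4]
  rw [numRep, this, (List.cons_injective).encard_image, numRep]

lemma omega_ne_one : ω ≠ 1 := by
  intro h
  have := @coords_zero (-1) 1 (by push_cast; linear_combination h)
  omega

lemma omega_sq_ne_one : ω ^ 2 ≠ 1 := by
  intro h
  have := @coords_zero (-2) (-1) (by push_cast; linear_combination h - omega_sq)
  omega

/-- The recursion on the least significant digit for numbers not divisible by `β`: it is one of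
the three digits congruent to `μ`. -/
lemma numRep_add_unit {y μ : ℂ} (hy : y ∈ EisZ) (hμ : IsDigitUnit μ) (k : ℤ) :
    numRep (eβ * y + μ) k =
      numRep y (k - 1) + numRep (y - μ) (k - 1) + numRep (y + μ * ω ^ 2) (k - 1) := by
  have e1 : eβ * y + μ = μ + eβ * y := by ring
  have e2 : eβ * y + μ = μ * ω + eβ * (y - μ) := by rw [eβ]; ring
  have e3 : eβ * y + μ = μ * ω ^ 2 + eβ * (y + μ * ω ^ 2) := by
    rw [eβ]
    linear_combination (-μ * (ω - 1)) * omega_sq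
  have u2 : IsDigitUnit (μ * ω) := hμ.mul isDigitUnit_omega
  have u3 : IsDigitUnit (μ * ω ^ 2) := by
    rw [sq]
    exact hμ.mul (isDigitUnit_omega.mul isDigitUnit_omega)
  have : repSet (eβ * y + μ) k =
      ((List.cons μ) '' repSet y (k - 1) ∪ (List.cons (μ * ω)) '' repSet (y - μ) (k - 1)) ∪
        (List.cons (μ * ω ^ 2)) '' repSet (y + μ * ω ^ 2) (k - 1) := by
    ext l
    constructor
    · intro hl
      obtain ⟨⟨h1, h2⟩, -, -⟩ := id hl
      cases l with
      | nil =>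
        exfalso
        refine hμ.2 (digit_congr_zero hμ.1 (EisZ_neg hy) ?_)
        have h2' : (0 : ℂ) = eβ * y + μ := h2
        linear_combination -h2'
      | cons d l =>
        rw [List.forall_mem_cons] at h1
        rw [evalE_cons] at h2
        rcases digit_congr h1.1 hμ (EisZ_sub hy (evalE_mem h1.2))
          (by linear_combination h2) with rfl | rfl | rfl
        · exact Or.inl (Or.inl ⟨l, (cons_unit_mem_repSet hμ e1 l).1 hl, rfl⟩)
        · exact Or.inl (Or.inr ⟨l, (cons_unit_mem_repSet u2 e2 l).1 hl, rfl⟩)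
        · exact Or.inr ⟨l, (cons_unit_mem_repSet u3 e3 l).1 hl, rfl⟩
    · rintro ((⟨l, hl, rfl⟩ | ⟨l, hl, rfl⟩) | ⟨l, hl, rfl⟩)
      · exact (cons_unit_mem_repSet hμ e1 l).2 hl
      · exact (cons_unit_mem_repSet u2 e2 l).2 hl
      · exact (cons_unit_mem_repSet u3 e3 l).2 hl
  have n12 : μ ≠ μ * ω := fun h => omega_ne_one
    (mul_left_cancel₀ hμ.2 (by linear_combination -h))
  have n13 : μ ≠ μ * ω ^ 2 := fun h => omega_sq_ne_one
    (mul_left_cancel₀ hμ.2 (by linear_combination -h))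
  have n23 : μ * ω ≠ μ * ω ^ 2 := fun h => omega_ne_one
    (mul_left_cancel₀ u2.2 (by linear_combination -h))
  rw [numRep, this, Set.encard_union_eq, Set.encard_union_eq,
    (List.cons_injective).encard_image, (List.cons_injective).encard_image,
    (List.cons_injective).encard_image, numRep, numRep, numRep]
  · rw [Set.disjoint_left]
    rintro _ ⟨l, -, rfl⟩ ⟨l', -, h⟩
    exact n12 (List.cons.inj h).1.symm
  · rw [Set.disjoint_left]
    rintro _ (⟨l, -, rfl⟩ | ⟨l, -, rfl⟩) ⟨l', -, h⟩
    · exact n13 (List.cons.inj h).1.symm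
    · exact n23 (List.cons.inj h).1.symm

/-! ### Appending a block -/

/-- Lower bounds for weights around `x ∈ ℤ[ω]`: no representation of `x` has weight below `m`, and
no representation of a neighbour `x + u` of `x`, `u` a unit, has weight below `m - 1`. -/
structure WeightBound (x : ℂ) (m : ℤ) : Prop where
  mem : x ∈ EisZ
  self : ∀ k < m, numRep x k = 0
  nbr : ∀ u, IsDigitUnit u → ∀ k < m - 1, numRep (x + u) k = 0

lemma WeightBound.sub {x : ℂ} {m : ℤ} (h : WeightBound x m) {u : ℂ} (hu : IsDigitUnit u)
    {k : ℤ} (hk : k < m - 1) : numRep (x - u) k = 0 := by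
  rw [sub_eq_add_neg]
  exact h.nbr _ hu.neg k hk

lemma IsDigitUnit.mul_omega_sq {u : ℂ} (hu : IsDigitUnit u) : IsDigitUnit (u * ω ^ 2) := by
  rw [sq]
  exact hu.mul (isDigitUnit_omega.mul isDigitUnit_omega)

/-- Multiplication by `β` raises the bound for the neighbours by one. -/
lemma WeightBound.beta_nbr {x : ℂ} {m : ℤ} (h : WeightBound x m) {u : ℂ}
    (hu : IsDigitUnit u) {k : ℤ} (hk : k < m) : numRep (eβ * x + u) k = 0 := by
  rw [numRep_add_unit h.mem hu, h.self _ (by omega), h.sub hu (by omega),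
    h.nbr _ hu.mul_omega_sq _ (by omega)]
  simp

lemma WeightBound.beta {x : ℂ} {m : ℤ} (h : WeightBound x m) : WeightBound (eβ * x) m where
  mem := EisZ_mul EisZ_beta h.mem
  self k hk := by rw [numRep_beta_mul h.mem, h.self k hk]
  nbr u hu k hk := h.beta_nbr hu (by omega)

/-- The recursion for `β² x + d` itself: the digits `d, d ω, d ω²` are split off, and a second
digit whenever the quotient is not divisible by `β`. -/
lemma numRep_block {x d : ℂ} {m k : ℤ} (h : WeightBound x m) (hd : IsDigitUnit d)
    (hk : k ≤ m + 1) :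
    numRep (eβ * (eβ * x) + d) k = numRep x (k - 1) + numRep (x - d * lam ^ 3) (k - 2)
      + 2 * numRep (x - d * lam ^ 4) (k - 2) + numRep (x - d * lam ^ 5) (k - 2) := by
  have hb := h.beta.mem
  rw [numRep_add_unit hb hd, numRep_beta_mul h.mem, sub_eq_add_neg (eβ * x),
    numRep_add_unit h.mem hd.neg, numRep_add_unit h.mem hd.mul_omega_sq,
    h.self (k - 1 - 1) (by omega)]
  have e3 : x - -d = x - d * lam ^ 3 := by rw [lam_pow_three]; ring
  have e4 : x + -d * ω ^ 2 = x - d * lam ^ 4 := by rw [lam_pow_four]; ring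
  have e4' : x - d * ω ^ 2 = x - d * lam ^ 4 := by rw [lam_pow_four]
  have e5 : x + d * ω ^ 2 * ω ^ 2 = x - d * lam ^ 5 := by
    rw [lam_pow_five]
    linear_combination (d * ω ^ 2 - d * ω) * omega_sq
  rw [e3, e4, e4', e5, sub_sub, one_add_one_eq_two]
  ring

lemma numRep_block_sub_zero {x d : ℂ} {m k : ℤ} (h : WeightBound x m) :
    numRep (eβ * (eβ * x) + d - d * lam ^ 0) k = numRep x k := by
  rw [pow_zero, mul_one, add_sub_cancel_right, numRep_beta_mul h.beta.mem, numRep_beta_mul h.mem]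

lemma numRep_block_sub_one {x d : ℂ} {m k : ℤ} (h : WeightBound x m) (hd : IsDigitUnit d)
    (hk : k ≤ m) : numRep (eβ * (eβ * x) + d - d * lam ^ 1) k = 0 := by
  have e : eβ * (eβ * x) + d - d * lam ^ 1 = eβ * (eβ * x) + -(d * ω) := by rw [lam]; ring
  have hu := (hd.mul isDigitUnit_omega).neg
  rw [e, numRep_add_unit h.beta.mem hu, h.beta.self _ (by omega), sub_eq_add_neg (eβ * x),
    h.beta_nbr hu.neg (by omega), h.beta_nbr hu.mul_omega_sq (by omega)]
  simp

lemma numRep_block_sub_two {x d : ℂ} {m k : ℤ} (h : WeightBound x m) (hd : IsDigitUnit d)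
    (hk : k ≤ m) : numRep (eβ * (eβ * x) + d - d * lam ^ 2) k =
      numRep (x - d * lam ^ 3) (k - 1) + numRep (x - d * lam ^ 4) (k - 1) := by
  have e : eβ * (eβ * x) + d - d * lam ^ 2 = eβ * (eβ * x + -d) := by
    rw [lam_pow_two, eβ]
    ring
  have e3 : x - -d = x - d * lam ^ 3 := by rw [lam_pow_three]; ring
  have e4 : x + -d * ω ^ 2 = x - d * lam ^ 4 := by rw [lam_pow_four]; ring
  rw [e, numRep_beta_mul (EisZ_add h.beta.mem (mem_EisZ_of_mem_eD hd.neg.1)),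
    numRep_add_unit h.mem hd.neg, h.self _ (by omega), e3, e4, zero_add]

/-- Here `2 d = -d + β · β (-d ω²)`, because `3 = -ω² β²`. -/
lemma numRep_block_sub_three {x d : ℂ} {m k : ℤ} (h : WeightBound x m) (hd : IsDigitUnit d)
    (hk : k ≤ m) : numRep (eβ * (eβ * x) + d - d * lam ^ 3) k =
      numRep (x - d * lam ^ 4) (k - 1) := by
  have hy : x - d * lam ^ 4 ∈ EisZ := EisZ_sub h.mem
    (mem_EisZ_of_mem_eD (hd.mul (isDigitUnit_lam_pow 4)).1)
  have e : eβ * (eβ * x) + d - d * lam ^ 3 = eβ * (eβ * (x - d * lam ^ 4)) + -d := by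
    rw [lam_pow_three, lam_pow_four, eβ]
    linear_combination (d * (ω ^ 2 - 3 * ω + 3)) * omega_sq
  have e1 : eβ * (x - d * lam ^ 4) - -d = eβ * x + d * ω ^ 2 := by
    rw [lam_pow_four, eβ]
    linear_combination (-d * (ω - 1)) * omega_sq
  have e2 : eβ * (x - d * lam ^ 4) + -d * ω ^ 2 = eβ * x + -d := by
    rw [lam_pow_four, eβ]
    linear_combination (-d * (ω - 1)) * omega_sq
  rw [e, numRep_add_unit (EisZ_mul EisZ_beta hy) hd.neg, e1, e2, numRep_beta_mul hy,
    h.beta_nbr hd.mul_omega_sq (by omega), h.beta_nbr hd.neg (by omega)]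
  simp

lemma numRep_block_sub_four {x d : ℂ} {m k : ℤ} (h : WeightBound x m) (hd : IsDigitUnit d)
    (hk : k ≤ m) : numRep (eβ * (eβ * x) + d - d * lam ^ 4) k =
      numRep (x - d * lam ^ 4) (k - 1) + numRep (x - d * lam ^ 5) (k - 1) := by
  have e : eβ * (eβ * x) + d - d * lam ^ 4 = eβ * (eβ * x + d * ω ^ 2) := by
    rw [lam_pow_four, eβ]
    linear_combination (-d * (ω - 1)) * omega_sq
  have e4 : x - d * ω ^ 2 = x - d * lam ^ 4 := by rw [lam_pow_four]
  have e5 : x + d * ω ^ 2 * ω ^ 2 = x - d * lam ^ 5 := by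
    rw [lam_pow_five]
    linear_combination (d * ω ^ 2 - d * ω) * omega_sq
  rw [e, numRep_beta_mul (EisZ_add h.beta.mem (mem_EisZ_of_mem_eD hd.mul_omega_sq.1)),
    numRep_add_unit h.mem hd.mul_omega_sq, h.self _ (by omega), e4, e5, zero_add]

lemma numRep_block_sub_five {x d : ℂ} {m k : ℤ} (h : WeightBound x m) (hd : IsDigitUnit d)
    (hk : k ≤ m) : numRep (eβ * (eβ * x) + d - d * lam ^ 5) k = 0 := by
  have hu : IsDigitUnit (d * lam ^ 1) := hd.mul (isDigitUnit_lam_pow 1)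
  have e : eβ * (eβ * x) + d - d * lam ^ 5 = eβ * (eβ * x) + d * lam ^ 1 := by
    rw [lam_pow_five, lam]
    ring
  rw [e, numRep_add_unit h.beta.mem hu, h.beta.self _ (by omega), sub_eq_add_neg (eβ * x),
    h.beta_nbr hu.neg (by omega), h.beta_nbr hu.mul_omega_sq (by omega)]
  simp

/-- Every power of `λ` has the form `λ^i λ^t` with `t < 6`. -/
lemma exists_shift (i j : ℕ) : ∃ t < 6, (i + t) % 6 = j % 6 ∧ lam ^ j = lam ^ i * lam ^ t := by
  have key : (i + (j + 5 * i) % 6) % 6 = j % 6 := by omega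
  refine ⟨(j + 5 * i) % 6, Nat.mod_lt _ (by norm_num), key, ?_⟩
  rw [← pow_add, ← lam_pow_mod j, ← key, lam_pow_mod]

lemma WeightBound.block {x : ℂ} {m : ℤ} (h : WeightBound x m) (i : ℕ) :
    WeightBound (eβ * (eβ * x) + lam ^ i) (m + 1) where
  mem := EisZ_add h.beta.beta.mem (mem_EisZ_of_mem_eD (lam_pow_mem i))
  self k hk := by
    have hs := fun j => h.sub ((isDigitUnit_lam_pow i).mul (isDigitUnit_lam_pow j))
      (show k - 2 < m - 1 by omega)
    rw [numRep_block h (isDigitUnit_lam_pow i) hk.le, h.self _ (by omega), hs, hs, hs]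
    simp
  nbr u hu k hk := by
    have hd := isDigitUnit_lam_pow i
    have hs := fun j => h.sub (hd.mul (isDigitUnit_lam_pow j)) (show k - 1 < m - 1 by omega)
    obtain ⟨j, -, hj⟩ := isDigitUnit_iff.1 hu.neg
    obtain ⟨t, ht, -, htj⟩ := exists_shift i j
    rw [← sub_neg_eq_add, hj, htj]
    interval_cases t
    · rw [numRep_block_sub_zero h, h.self _ (by omega)]
    · rw [numRep_block_sub_one h hd (by omega)]
    · rw [numRep_block_sub_two h hd (by omega), hs, hs, add_zero]
    · rw [numRep_block_sub_three h hd (by omega), hs]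
    · rw [numRep_block_sub_four h hd (by omega), hs, hs, add_zero]
    · rw [numRep_block_sub_five h hd (by omega)]

/-! ### The row vector of counts -/

/-- The entry of a row vector that belongs to the unit `λ^j`. -/
def unitEntry (v : Fin 7 → ℕ) (j : ℕ) : ℕ := v ⟨j % 6 + 1, by omega⟩

/-- `v` lists the number of representations of `x` of weight `m` and, for the six units `λ^j`,
the number of representations of `x - λ^j` of weight `m - 1`. -/
structure CountRow (x : ℂ) (m : ℤ) (v : Fin 7 → ℕ) : Prop where
  bound : WeightBound x m
  self : numRep x m = v 0
  nbr : ∀ j : ℕ, numRep (x - lam ^ j) (m - 1) = unitEntry v j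

/-- The row vector obtained from `v` by multiplication with `A_0`. -/
def zeroRow (v : Fin 7 → ℕ) : Fin 7 → ℕ := fun a => if a = 0 then v 0 else 0

/-- The entry belonging to `λ^(i + t)`, `t < 6`, of the product of the row vector `v` and the matrix
`A_d`, `d = λ^i`. -/
def blockEntry (v : Fin 7 → ℕ) (i t : ℕ) : ℕ :=
  match t with
  | 0 => v 0
  | 2 => unitEntry v (i + 3) + unitEntry v (i + 4)
  | 3 => unitEntry v (i + 4)
  | 4 => unitEntry v (i + 4) + unitEntry v (i + 5)
  | _ => 0

/-- The row vector obtained from `v` by multiplication with the matrix `A_d`, `d = λ^i`. The entry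
`a ≠ 0` belongs to `λ^(a - 1)`, and `a - 1 - i` is `a + 5 + 5 i` modulo `6`. -/
def blockRow (v : Fin 7 → ℕ) (i : ℕ) : Fin 7 → ℕ := fun a =>
  if a = 0 then v 0 + unitEntry v (i + 3) + 2 * unitEntry v (i + 4) + unitEntry v (i + 5)
  else blockEntry v i (((a : ℕ) + 5 + 5 * i) % 6)

lemma CountRow.zero_block {x : ℂ} {m : ℤ} {v : Fin 7 → ℕ} (h : CountRow x m v) :
    CountRow (eβ * x) m (zeroRow v) where
  bound := h.bound.beta
  self := by rw [numRep_beta_mul h.bound.mem, h.self]; simp [zeroRow]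
  nbr j := by
    rw [sub_eq_add_neg, h.bound.beta_nbr (isDigitUnit_lam_pow j).neg (by omega)]
    simp [unitEntry, zeroRow, Fin.ext_iff]

lemma CountRow.block {x : ℂ} {m : ℤ} {v : Fin 7 → ℕ} (h : CountRow x m v) (i : ℕ) :
    CountRow (eβ * (eβ * x) + lam ^ i) (m + 1) (blockRow v i) where
  bound := h.bound.block i
  self := by
    rw [numRep_block h.bound (isDigitUnit_lam_pow i) le_rfl, ← pow_add, ← pow_add, ← pow_add,
      add_sub_cancel_right, show m + 1 - 2 = m - 1 by ring, h.self, h.nbr, h.nbr, h.nbr]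
    simp [blockRow]
  nbr j := by
    have hd := isDigitUnit_lam_pow i
    obtain ⟨t, ht, hmod, htj⟩ := exists_shift i j
    have hrow : unitEntry (blockRow v i) j = blockEntry v i t := by
      have : (j % 6 + 1 + 5 + 5 * i) % 6 = t := by omega
      simp [unitEntry, blockRow, Fin.ext_iff, this]
    rw [hrow, htj, add_sub_cancel_right]
    interval_cases t
    · rw [numRep_block_sub_zero h.bound, h.self]
      rfl
    · rw [numRep_block_sub_one h.bound hd le_rfl]
      rfl
    · rw [numRep_block_sub_two h.bound hd le_rfl, ← pow_add, ← pow_add, h.nbr, h.nbr]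
      simp [blockEntry]
    · rw [numRep_block_sub_three h.bound hd le_rfl, ← pow_add, h.nbr]
      rfl
    · rw [numRep_block_sub_four h.bound hd le_rfl, ← pow_add, ← pow_add, h.nbr, h.nbr]
      simp [blockEntry]
    · rw [numRep_block_sub_five h.bound hd le_rfl]
      rfl

lemma repSet_zero : repSet 0 0 = {[]} := by
  ext l
  simp only [repSet, Set.mem_ofPred_eq, Set.mem_singleton_iff]
  constructor
  · rintro ⟨-, h2, h3⟩
    by_contra hl
    -- All digits vanish, in particular the leading one.
    have hz : ∀ d ∈ l, d = 0 := by
      simpa [eweight] using h3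
    refine h2 ?_
    rw [List.getLast?_eq_some_getLast hl, hz _ (List.getLast_mem hl)]
  · rintro rfl
    exact ⟨⟨by simp, rfl⟩, by simp [eNormalized], by simp [eweight]⟩

lemma countRow_nil : CountRow 0 0 (fun a => if a = 0 then 1 else 0) := by
  have hneg : ∀ (x : ℂ) (k : ℤ), k < 0 → numRep x k = 0 := by
    intro x k hk
    rw [numRep, Set.encard_eq_zero, Set.eq_empty_iff_forall_notMem]
    rintro l ⟨-, -, h⟩
    omega
  refine ⟨⟨EisZ_zero, fun k hk => hneg _ _ hk, fun u _ k hk => hneg _ _ (by omega)⟩, ?_, ?_⟩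
  · rw [numRep, repSet_zero]
    simp
  · intro j
    rw [hneg _ _ (by norm_num)]
    simp [unitEntry, Fin.ext_iff]

/-! ### The matrices -/

lemma row_mul_E0 (v : Fin 7 → ℕ) :
    (fun a => (v a : ℤ)) ᵥ* E0 = fun a => ((zeroRow v a : ℕ) : ℤ) := by
  funext a
  fin_cases a <;> simp [Matrix.vecMul, dotProduct, Fin.sum_univ_succ, E0, zeroRow, Fin.ext_iff]

lemma AmatE_lam_pow {i : ℕ} (hi : i < 6) : AmatE (lam ^ i) = (R7ᵀ) ^ i * E1 * R7 ^ i := by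
  have hne : ∀ a b : ℤ, a ≠ 0 ∨ b ≠ 0 → ∀ z w : ℂ, z - w = a + b * ω → z ≠ w := by
    intro a b hab z w h hzw
    have := @coords_zero a b (by rw [← h, hzw, sub_self])
    omega
  have h0 : lam ^ i ≠ 0 := pow_ne_zero _ lam_ne_zero
  have hs := omega_sq
  rw [AmatE, if_neg h0]
  interval_cases i
  · simp
  · rw [if_neg (hne 0 1 (by simp) _ _ (by rw [lam]; push_cast; ring)),
      if_pos (by rw [lam]; linear_combination hs)]
  · rw [lam_pow_two, if_neg (hne (-1) 1 (by simp) _ _ (by push_cast; ring)),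
      if_neg (hne (-1) 0 (by simp) _ _ (by push_cast; linear_combination hs)), if_pos rfl]
  · rw [lam_pow_three, if_neg (hne (-2) 0 (by simp) _ _ (by push_cast; ring)),
      if_neg (hne (-2) (-1) (by simp) _ _ (by push_cast; linear_combination hs)),
      if_neg (hne (-1) (-1) (by simp) _ _ (by push_cast; ring)), if_pos rfl]
  · rw [lam_pow_four,
      if_neg (hne (-2) (-1) (by simp) _ _ (by push_cast; linear_combination hs)),
      if_neg (hne (-2) (-2) (by simp) _ _ (by push_cast; linear_combination 2 * hs)),
      if_neg (hne (-1) (-2) (by simp) _ _ (by push_cast; linear_combination hs)),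
      if_neg (hne 0 (-1) (by simp) _ _ (by push_cast; linear_combination hs)), if_pos rfl]
  · rw [lam_pow_five, if_neg (hne (-1) (-1) (by simp) _ _ (by push_cast; ring)),
      if_neg (hne (-1) (-2) (by simp) _ _ (by push_cast; linear_combination hs)),
      if_neg (hne 0 (-2) (by simp) _ _ (by push_cast; ring)),
      if_neg (hne 1 (-1) (by simp) _ _ (by push_cast; ring)),
      if_neg (hne 1 0 (by simp) _ _ (by push_cast; linear_combination -hs))]

/-- `R` acts on rows by a cyclic shift of the last six entries. -/
lemma vecMul_R7 (w : Fin 7 → ℤ) : w ᵥ* R7 = ![w 0, w 6, w 1, w 2, w 3, w 4, w 5] := by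
  funext a
  fin_cases a <;> simp [Matrix.vecMul, dotProduct, Fin.sum_univ_succ, R7]

lemma vecMul_R7_transpose (w : Fin 7 → ℤ) :
    w ᵥ* R7ᵀ = ![w 0, w 2, w 3, w 4, w 5, w 6, w 1] := by
  funext a
  fin_cases a <;> simp [Matrix.vecMul, dotProduct, Fin.sum_univ_succ, R7, Matrix.transpose]

lemma vecMul_E1 (w : Fin 7 → ℤ) :
    w ᵥ* E1 = ![w 0 + w 4 + 2 * w 5 + w 6, w 0, 0, w 4 + w 5, w 5, w 5 + w 6, 0] := by
  funext a
  fin_cases a <;> simp [Matrix.vecMul, dotProduct, Fin.sum_univ_succ, E1] <;> ring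

lemma row_mul_AmatE (v : Fin 7 → ℕ) {i : ℕ} (hi : i < 6) :
    (fun a => (v a : ℤ)) ᵥ* AmatE (lam ^ i) = fun a => ((blockRow v i a : ℕ) : ℤ) := by
  rw [AmatE_lam_pow hi, ← Matrix.vecMul_vecMul, ← Matrix.vecMul_vecMul]
  interval_cases i <;>
  · simp only [pow_succ, pow_zero, one_mul, ← Matrix.vecMul_vecMul, vecMul_R7,
      vecMul_R7_transpose, vecMul_E1, Matrix.vecMul_one]
    funext a
    fin_cases a <;> simp [blockRow, blockEntry, unitEntry, Fin.ext_iff]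

/-! ### Assembling the blocks -/

/-- The row vector of counts of a concatenation of blocks, with the weight of the word as `m`, is
the first row of the product of the matrices. -/
lemma exists_countRow (blocks : List (List ℂ))
    (hblocks : ∀ b ∈ blocks, b = [0] ∨ ∃ d ∈ eD, d ≠ 0 ∧ b = [0, d]) :
    ∃ v : Fin 7 → ℕ,
      CountRow (evalE blocks.flatten.reverse) (eweight blocks.flatten.reverse) v ∧
      e7 0 ᵥ* (blocks.map (fun b => AmatE (b.getLastD 0))).prod = fun a => (v a : ℤ) := by
  induction blocks using List.reverseRecOn with
  | nil =>
    refine ⟨fun a => if a = 0 then 1 else 0, ?_, ?_⟩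
    · simpa [evalE, eweight] using countRow_nil
    · funext a
      fin_cases a <;> simp [e7]
  | append_singleton bs b ih =>
    obtain ⟨v, hv, hrow⟩ := ih fun c hc => hblocks c (by simp [hc])
    rcases hblocks b (by simp) with rfl | ⟨d, hd, h0, rfl⟩
    · refine ⟨zeroRow v, ?_, ?_⟩
      · simpa [evalE_cons, eweight_cons_zero] using hv.zero_block
      · have : AmatE 0 = E0 := by simp [AmatE]
        rw [List.map_append, List.prod_append, ← Matrix.vecMul_vecMul, hrow]
        simpa [this] using row_mul_E0 v
    · obtain ⟨i, hi, rfl⟩ := isDigitUnit_iff.1 ⟨hd, h0⟩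
      refine ⟨blockRow v i, ?_, ?_⟩
      · have := hv.block i
        simpa [evalE_cons, eweight_cons_zero, eweight_cons h0, add_comm] using this
      · rw [List.map_append, List.prod_append, ← Matrix.vecMul_vecMul, hrow]
        simpa using row_mul_AmatE v hi

/-- Deleting leading zeros turns a representation into a normalized one of the same weight. -/
lemma exists_normalized (l : List ℂ) (hl : ∀ d ∈ l, d ∈ eD) :
    ∃ l', (∀ d ∈ l', d ∈ eD) ∧ evalE l' = evalE l ∧ eNormalized l' ∧ eweight l' = eweight l := by
  induction l with
  | nil => exact ⟨[], by simp, rfl, by simp [eNormalized], rfl⟩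
  | cons d l ih =>
    rw [List.forall_mem_cons] at hl
    obtain ⟨l', h1, h2, h3, h4⟩ := ih hl.2
    by_cases h : l' = [] ∧ d = 0
    · obtain ⟨rfl, rfl⟩ := h
      refine ⟨[], by simp, ?_, h3, ?_⟩
      · rw [evalE_cons, ← h2]
        simp [evalE]
      · rw [eweight_cons_zero, h4]
    · refine ⟨d :: l', List.forall_mem_cons.2 ⟨hl.1, h1⟩, ?_, ?_, ?_⟩
      · rw [evalE_cons, evalE_cons, h2]
      · exact (eNormalized_cons _ _).2 ⟨h3, fun hl' hd => h ⟨hl', hd⟩⟩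
      · by_cases hd : d = 0
        · rw [hd, eweight_cons_zero, eweight_cons_zero, h4]
        · rw [eweight_cons hd, eweight_cons hd, h4]

/-- If a representation of `x ∈ ℤ[ω]` (most significant digit first) is a
concatenation of blocks from `C = {0} ∪ {0d : d ∈ D, d ≠ 0}`, then the number
of optimal representations of `x` is `e A_{d_1} ⋯ A_{d_n} eᵀ`, where `d_ℓ` is
the last digit of the `ℓ`-th block. -/
theorem stmt16 (x : ℂ) (hx : x ∈ EisZ) (blocks : List (List ℂ))
    (hblocks : ∀ b ∈ blocks, b = [0] ∨ ∃ d ∈ eD, d ≠ 0 ∧ b = [0, d])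
    (hrep : eIsRep x blocks.flatten.reverse) :
    (enumOpt x : ℤ) =
      (e7 * (blocks.map (fun b => AmatE (b.getLastD 0))).prod * e7ᵀ) 0 0 := by
  obtain ⟨v, hv, hrow⟩ := exists_countRow blocks hblocks
  set w := blocks.flatten.reverse
  rw [hrep.2] at hv
  have hmin : ∀ l', eIsRep x l' → eweight w ≤ eweight l' := by
    intro l' hl'
    by_contra! hlt
    obtain ⟨l, h1, h2, h3, h4⟩ := exists_normalized l' hl'.1
    have h0 := hv.bound.self (eweight l') (by exact_mod_cast hlt)
    rw [numRep, Set.encard_eq_zero] at h0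
    exact (Set.eq_empty_iff_forall_notMem.1 h0) l
      ⟨⟨h1, h2.trans hl'.2⟩, h3, by exact_mod_cast h4⟩
  have hset : {l | eOptimal x l} = repSet x (eweight w) := by
    ext l
    constructor
    · rintro ⟨h1, h2, h3⟩
      exact ⟨h1, h2, by exact_mod_cast le_antisymm (h3 w hrep) (hmin l h1)⟩
    · rintro ⟨h1, h2, h3⟩
      have h3' : eweight l = eweight w := by exact_mod_cast h3
      exact ⟨h1, h2, fun l' hl' => h3' ▸ hmin l' hl'⟩
  have hcard : enumOpt x = v 0 := by
    have : enumOpt x = Set.ncard {l | eOptimal x l} := rfl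
    rw [this, hset, Set.ncard, show (repSet x (eweight w)).encard = v 0 from hv.self]
    simp
  have hlast : (e7 * (blocks.map (fun b => AmatE (b.getLastD 0))).prod * e7ᵀ) 0 0 =
      (e7 0 ᵥ* (blocks.map (fun b => AmatE (b.getLastD 0))).prod) 0 := by
    rw [Matrix.mul_apply]
    simp [Fin.sum_univ_succ, e7, Matrix.mul_apply, Matrix.vecMul, dotProduct]
  rw [hlast, hrow, hcard]
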